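/- Fix an integer r ≥ 2. There exists a constant C_r > 0 such that for all integers n ≥ 1, W_r(n) ≤ C_r / n^r. -/

import Mathlib

/-- The cycle structure of a permutation of `n` letters: the multiset of the lengths
of its disjoint cycles, including fixed points. -/
def cycleStruct {n : ℕ} (σ : Equiv.Perm (Fin n)) : Multiset ℕ :=
  σ.cycleType + Multiset.replicate (n - σ.cycleType.sum) 1

/-- W_r(n): the probability that `r` independent uniformly random permutations of `n`
letters all have the same cycle structure. -/
noncomputable def W (r n : ℕ) : ℝ :=
  (Nat.card {v : Fin r → Equiv.Perm (Fin n) //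
      ∀ i j, cycleStruct (v i) = cycleStruct (v j)} : ℝ) / (n.factorial : ℝ) ^ r

/-- Partitions of `n` as multisets. -/
noncomputable def partsOf (n : ℕ) : Finset (Multiset ℕ) :=
  (Finset.univ : Finset (Nat.Partition n)).image Nat.Partition.parts

lemma mem_partsOf {n : ℕ} {m : Multiset ℕ} :
    m ∈ partsOf n ↔ m.sum = n ∧ ∀ i ∈ m, 0 < i := by
  unfold partsOf
  rw [Finset.mem_image]
  constructor
  · rintro ⟨p, -, rfl⟩
    exact ⟨p.parts_sum, fun i hi => p.parts_pos hi⟩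
  · rintro ⟨h1, h2⟩
    exact ⟨⟨m, fun {i} hi => h2 i hi, h1⟩, Finset.mem_univ _, rfl⟩

/-- Centralizer order. -/
def zz (m : Multiset ℕ) : ℕ := m.prod * ∏ i ∈ m.toFinset, (m.count i).factorial

lemma zz_eq (m : Multiset ℕ) (s : Finset ℕ) (h : m.toFinset ⊆ s) :
    zz m = m.prod * ∏ i ∈ s, (m.count i).factorial := by
  unfold zz
  congr 1
  apply Finset.prod_subset h
  intro x _ hx
  rw [Multiset.mem_toFinset] at hx
  rw [Multiset.count_eq_zero_of_notMem hx]; rfl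

lemma zz_cons (j : ℕ) (m : Multiset ℕ) : zz (j ::ₘ m) = j * (m.count j + 1) * zz m := by
  have hj : j ∈ (j ::ₘ m).toFinset := by simp
  rw [zz_eq m (j ::ₘ m).toFinset (by intro x; simp; tauto), zz, Multiset.prod_cons,
    ← Finset.mul_prod_erase _ _ hj, ← Finset.mul_prod_erase _ (fun i => (m.count i).factorial) hj,
    Multiset.count_cons_self, Nat.factorial_succ]
  have : ∏ x ∈ (j ::ₘ m).toFinset.erase j, (Multiset.count x (j ::ₘ m)).factorial
      = ∏ x ∈ (j ::ₘ m).toFinset.erase j, (Multiset.count x m).factorial := by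
    apply Finset.prod_congr rfl
    intro x hx
    rw [Multiset.count_cons_of_ne (Finset.ne_of_mem_erase hx)]
  rw [this]; ring

lemma zz_pos (m : Multiset ℕ) (h : ∀ i ∈ m, 0 < i) : 0 < zz m := by
  unfold zz
  apply Nat.mul_pos
  · apply Nat.pos_of_ne_zero
    intro h0
    rw [Multiset.prod_eq_zero_iff] at h0
    exact absurd (h 0 h0) (by simp)
  · exact Finset.prod_pos fun i _ => Nat.factorial_pos _

lemma zz_rep (c : Multiset ℕ) (h : 1 ∉ c) (k : ℕ) :
    zz (c + Multiset.replicate k 1) = k.factorial * zz c := by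
  induction k with
  | zero => simp
  | succ k ih =>
    rw [Multiset.replicate_succ, Multiset.add_cons, zz_cons, ih, Nat.factorial_succ,
      Multiset.count_add, Multiset.count_eq_zero_of_notMem h, Multiset.count_replicate_self]
    ring

lemma card_cs_le (n : ℕ) (m : Multiset ℕ) (hm : ∀ i ∈ m, 0 < i) :
    ((Finset.univ.filter (fun σ : Equiv.Perm (Fin n) => cycleStruct σ = m)).card : ℝ)
      ≤ n.factorial * (1 / (zz m : ℝ)) := by
  by_cases hne : ∃ σ0 : Equiv.Perm (Fin n), cycleStruct σ0 = m
  · obtain ⟨σ0, h0⟩ := hne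
    have h1 : ∀ σ : Equiv.Perm (Fin n), 1 ∉ σ.cycleType := fun σ hh =>
      absurd (Equiv.Perm.one_lt_of_mem_cycleType hh) (lt_irrefl _)
    have key : ∀ σ : Equiv.Perm (Fin n), σ.cycleType = (cycleStruct σ).filter (· ≠ 1) := by
      intro σ
      unfold cycleStruct
      rw [Multiset.filter_add, Multiset.filter_eq_self.2, Multiset.filter_eq_nil.2, add_zero]
      · intro a ha
        simp [Multiset.eq_of_mem_replicate ha]
      · rintro a ha rfl
        exact h1 σ ha
    have hsub : (Finset.univ.filter (fun σ : Equiv.Perm (Fin n) => cycleStruct σ = m)) ⊆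
        (Finset.univ.filter (fun σ : Equiv.Perm (Fin n) => σ.cycleType = σ0.cycleType)) := by
      intro σ
      simp only [Finset.mem_filter, Finset.mem_univ, true_and]
      intro h
      rw [key σ, key σ0, h, h0]
    have hz : zz m = (n - σ0.cycleType.sum).factorial * zz σ0.cycleType := by
      rw [← h0, cycleStruct, zz_rep _ (h1 σ0)]
    have hc := Equiv.Perm.card_of_cycleType (Fin n) σ0.cycleType
    have hle := Finset.card_le_card hsub
    rw [hc] at hle
    split_ifs at hle with hi
    · have : ((Finset.univ.filter (fun σ : Equiv.Perm (Fin n) => cycleStruct σ = m)).card : ℝ) ≤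
          ((n.factorial / zz m : ℕ) : ℝ) := by
        rw [hz, zz]
        simp only [Fintype.card_fin] at hle
        rw [← mul_assoc]
        exact_mod_cast hle
      refine this.trans (Nat.cast_div_le.trans ?_)
      rw [mul_one_div]
    · have h0' : (Finset.univ.filter (fun σ : Equiv.Perm (Fin n) => cycleStruct σ = m)).card = 0 := by
        omega
      rw [h0']; simp only [Nat.cast_zero]; positivity
  · have : (Finset.univ.filter (fun σ : Equiv.Perm (Fin n) => cycleStruct σ = m)) = ∅ := by
      apply Finset.filter_eq_empty_iff.2
      intro σ _ h
      exact hne ⟨σ, h⟩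
    rw [this]; simp only [Finset.card_empty, Nat.cast_zero]; positivity

/-- The sum over partitions. -/
noncomputable def aa (r n : ℕ) : ℝ := ∑ m ∈ partsOf n, (1 / (zz m : ℝ)) ^ r

lemma aa_nonneg (r n : ℕ) : 0 ≤ aa r n := Finset.sum_nonneg fun m _ => by positivity

lemma cs_mem {n : ℕ} (σ : Equiv.Perm (Fin n)) : cycleStruct σ ∈ partsOf n := by
  rw [mem_partsOf, cycleStruct]
  have h : σ.cycleType.sum ≤ n := by
    rw [Equiv.Perm.sum_cycleType]; simpa using Finset.card_le_univ σ.support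
  constructor
  · simp; omega
  · intro i hi
    rw [Multiset.mem_add] at hi
    rcases hi with hi | hi
    · have := Equiv.Perm.one_lt_of_mem_cycleType hi
      omega
    · rw [Multiset.eq_of_mem_replicate hi]; exact one_pos

lemma W_le_aa (r n : ℕ) (hr : 2 ≤ r) : W r n ≤ aa r n := by
  classical
  have hf : (0 : ℝ) < (n.factorial : ℝ) ^ r := by positivity
  unfold W
  rw [div_le_iff₀ hf, Nat.card_eq_fintype_card, Fintype.card_subtype]
  set F : Multiset ℕ → Finset (Equiv.Perm (Fin n)) := fun m =>
    Finset.univ.filter (fun σ => cycleStruct σ = m) with hF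
  have hsub : (Finset.univ.filter (fun v : Fin r → Equiv.Perm (Fin n) =>
      ∀ i j, cycleStruct (v i) = cycleStruct (v j))) ⊆
      (partsOf n).biUnion (fun m => Fintype.piFinset (fun _ : Fin r => F m)) := by
    intro v hv
    simp only [Finset.mem_filter, Finset.mem_univ, true_and] at hv
    rw [Finset.mem_biUnion]
    refine ⟨cycleStruct (v ⟨0, by omega⟩), cs_mem _, ?_⟩
    rw [Fintype.mem_piFinset]
    intro i
    simp [hF, hv i ⟨0, by omega⟩]
  have h1 := (Finset.card_le_card hsub).trans Finset.card_biUnion_le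
  simp only [Fintype.card_piFinset, Finset.prod_const, Finset.card_univ, Fintype.card_fin] at h1
  have h2 : ((Finset.univ.filter (fun v : Fin r → Equiv.Perm (Fin n) =>
      ∀ i j, cycleStruct (v i) = cycleStruct (v j))).card : ℝ) ≤
      ∑ m ∈ partsOf n, ((F m).card : ℝ) ^ r := by exact_mod_cast h1
  refine h2.trans ?_
  rw [aa, Finset.sum_mul]
  apply Finset.sum_le_sum
  intro m hm
  rw [← mul_pow, mul_comm (1 / (zz m : ℝ))]
  exact pow_le_pow_left₀ (by positivity) (card_cs_le n m (mem_partsOf.1 hm).2) r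

lemma aa_rec (r n : ℕ) (hr : 2 ≤ r) :
    (n : ℝ) * aa r n ≤ ∑ j ∈ Finset.Icc 1 n, aa r (n - j) / (j : ℝ) ^ (r - 1) := by
  classical
  have hstep : ∀ m ∈ partsOf n, (n : ℝ) * (1 / (zz m : ℝ)) ^ r ≤
      ∑ j ∈ (Finset.Icc 1 n).filter (· ∈ m),
        (1 / (zz (m.erase j) : ℝ)) ^ r / (j : ℝ) ^ (r - 1) := by
    intro m hm
    obtain ⟨hs, hp⟩ := mem_partsOf.1 hm
    have hset : (Finset.Icc 1 n).filter (· ∈ m) = m.toFinset := by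
      ext j
      simp only [Finset.mem_filter, Finset.mem_Icc, Multiset.mem_toFinset]
      constructor
      · exact fun h => h.2
      · intro h
        exact ⟨⟨hp j h, hs ▸ Multiset.single_le_sum (fun _ _ => Nat.zero_le _) j h⟩, h⟩
    rw [hset]
    have hn : (n : ℝ) = ∑ j ∈ m.toFinset, ((m.count j : ℝ) * j) := by
      rw [← hs, Finset.sum_multiset_count]; push_cast; simp
    rw [hn, Finset.sum_mul]
    apply Finset.sum_le_sum
    intro j hj
    rw [Multiset.mem_toFinset] at hj
    have hjp : (0 : ℝ) < j := by exact_mod_cast hp j hj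
    have hzz : zz m = j * m.count j * zz (m.erase j) := by
      conv_lhs => rw [← Multiset.cons_erase hj]
      rw [zz_cons, Multiset.count_erase_self, Nat.sub_add_cancel (Multiset.one_le_count_iff_mem.2 hj)]
    have hz0 : (0 : ℝ) < zz (m.erase j) := by
      exact_mod_cast zz_pos _ fun i hi => hp i (Multiset.mem_of_mem_erase hi)
    have hc : (1 : ℝ) ≤ m.count j := by exact_mod_cast Multiset.one_le_count_iff_mem.2 hj
    rw [hzz]
    obtain ⟨q, rfl⟩ : ∃ q, r = q + 1 := ⟨r - 1, by omega⟩
    push_cast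
    have hc0 : (0 : ℝ) < m.count j := by linarith
    have e : (m.count j : ℝ) * j * (1 / (j * m.count j * zz (m.erase j))) ^ (q + 1)
        = (1 / (zz (m.erase j) : ℝ)) ^ (q + 1) / (j : ℝ) ^ q / (m.count j : ℝ) ^ q := by
      rw [div_pow, div_pow, one_pow, mul_pow, mul_pow]
      field_simp
      ring
    rw [e]
    exact div_le_self (by positivity) (one_le_pow₀ hc)
  rw [aa, Finset.mul_sum]
  refine (Finset.sum_le_sum hstep).trans ?_
  simp_rw [Finset.sum_filter]
  rw [Finset.sum_comm]
  apply Finset.sum_le_sum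
  intro j hj
  rw [← Finset.sum_filter, ← Finset.sum_div]
  gcongr
  rw [aa]
  have hinj : Set.InjOn (fun m : Multiset ℕ => m.erase j) ((partsOf n).filter (fun m => j ∈ m) : Finset _) := by
    intro a ha b hb hab
    simp only [Finset.coe_filter, Set.mem_ofPred_eq] at ha hb hab
    rw [← Multiset.cons_erase ha.2, hab, Multiset.cons_erase hb.2]
  rw [← Finset.sum_image (f := fun m : Multiset ℕ => (1 / (zz m : ℝ)) ^ r) hinj]
  apply Finset.sum_le_sum_of_subset_of_nonneg
  · intro x hx
    rw [Finset.mem_image] at hx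
    obtain ⟨m, hm, rfl⟩ := hx
    rw [Finset.mem_filter, mem_partsOf] at hm
    obtain ⟨⟨h1, h2⟩, h3⟩ := hm
    rw [mem_partsOf]
    refine ⟨?_, fun i hi => h2 i (Multiset.mem_of_mem_erase hi)⟩
    have := Multiset.sum_erase h3
    omega
  · intros; positivity

lemma aa_zero (r : ℕ) : aa r 0 ≤ 1 := by
  have : partsOf 0 ⊆ {0} := by
    intro m hm
    obtain ⟨h1, h2⟩ := mem_partsOf.1 hm
    rw [Finset.mem_singleton]
    apply Multiset.eq_zero_of_forall_notMem
    intro a ha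
    have := Multiset.single_le_sum (fun _ _ => Nat.zero_le _) a ha
    have := h2 a ha
    omega
  calc aa r 0 ≤ ∑ m ∈ ({0} : Finset (Multiset ℕ)), (1 / (zz m : ℝ)) ^ r :=
        Finset.sum_le_sum_of_subset_of_nonneg this (by intros; positivity)
    _ ≤ 1 := by simp [zz]

lemma aa_le_one (r n : ℕ) (hr : 2 ≤ r) : aa r n ≤ 1 := by
  induction n using Nat.strong_induction_on with
  | _ n ih =>
    rcases Nat.eq_zero_or_pos n with rfl | hn
    · exact aa_zero r
    · have h := aa_rec r n hr
      have h2 : ∑ j ∈ Finset.Icc 1 n, aa r (n - j) / (j : ℝ) ^ (r - 1) ≤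
          ∑ j ∈ Finset.Icc 1 n, (1 : ℝ) := by
        apply Finset.sum_le_sum
        intro j hj
        rw [Finset.mem_Icc] at hj
        have hj1 : (1 : ℝ) ≤ j := by exact_mod_cast hj.1
        exact div_le_one_of_le₀ ((ih _ (by omega)).trans (one_le_pow₀ hj1)) (by positivity)
      simp only [Finset.sum_const, Nat.card_Icc, Nat.add_sub_cancel, nsmul_eq_mul, mul_one] at h2
      have hn' : (0 : ℝ) < n := by exact_mod_cast hn
      exact le_of_mul_le_mul_left (by linarith) hn'

lemma aa_rec' (r n : ℕ) (hr : 2 ≤ r) :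
    (n : ℝ) ^ r * aa r n ≤ ∑ k ∈ Finset.range n, aa r k * ((n : ℝ) / (n - k : ℝ)) ^ (r - 1) := by
  have h := aa_rec r n hr
  have e : ∑ j ∈ Finset.Icc 1 n, aa r (n - j) / (j : ℝ) ^ (r - 1) =
      ∑ k ∈ Finset.range n, aa r k / (n - k : ℝ) ^ (r - 1) := by
    apply Finset.sum_nbij' (fun j => n - j) (fun k => n - k)
    · intro j hj; simp at hj ⊢; omega
    · intro j hj; simp at hj ⊢; omega
    · intro j hj; simp at hj ⊢; omega
    · intro j hj; simp at hj ⊢; omega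
    · intro j hj
      simp only [Finset.mem_Icc] at hj
      rw [Nat.cast_sub hj.2]
      congr 2
      ring
  rw [e] at h
  calc (n : ℝ) ^ r * aa r n = (n : ℝ) ^ (r - 1) * (n * aa r n) := by
        rw [← mul_assoc, ← pow_succ, Nat.sub_add_cancel (by omega)]
    _ ≤ (n : ℝ) ^ (r - 1) * ∑ k ∈ Finset.range n, aa r k / (n - k : ℝ) ^ (r - 1) := by gcongr
    _ = _ := by
        rw [Finset.mul_sum]
        apply Finset.sum_congr rfl
        intro k _
        rw [div_pow]; ring

lemma tail_sq (K n : ℕ) (hK : 1 ≤ K) :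
    ∑ k ∈ Finset.Ico K n, 1 / (k : ℝ) ^ 2 ≤ 2 / (K : ℝ) := by
  obtain ⟨q, rfl⟩ : ∃ q, K = q + 1 := ⟨K - 1, by omega⟩
  have h := sum_Ioo_inv_sq_le (α := ℝ) q n
  have e : Finset.Ico (q + 1) n = Finset.Ioo q n := by
    ext x; simp only [Finset.mem_Ico, Finset.mem_Ioo]; omega
  rw [e]
  simpa [one_div] using h

lemma small (ε : ℝ) (hε : 0 < ε) : ∃ N : ℕ, ∀ n, N ≤ n →
    ∑ k ∈ Finset.Ico 1 n, 1 / ((k : ℝ) * (n - k : ℝ)) ≤ ε := by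
  have hc := (tendsto_one_div_add_atTop_nhds_zero_nat (𝕜 := ℝ)).cesaro
  have := (hc.eventually (gt_mem_nhds (half_pos hε)))
  obtain ⟨N, hN⟩ := Filter.eventually_atTop.1 this
  refine ⟨N + 1, fun n hn => ?_⟩
  have h1 := hN n (by omega)
  have hn0 : (0 : ℝ) < n := by exact_mod_cast (by omega : 0 < n)
  have hH : ∑ k ∈ Finset.Ico 1 n, 1 / (k : ℝ) ≤ ∑ i ∈ Finset.range n, 1 / ((i : ℝ) + 1) := by
    rw [Finset.sum_Ico_eq_sum_range]
    calc _ = ∑ i ∈ Finset.range (n - 1), 1 / ((i : ℝ) + 1) := by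
          apply Finset.sum_congr rfl; intro i _; push_cast; rw [add_comm]
      _ ≤ _ := Finset.sum_le_sum_of_subset_of_nonneg
          (Finset.range_subset_range.2 (Nat.sub_le _ _)) (by intros; positivity)
  have hR : ∑ k ∈ Finset.Ico 1 n, 1 / ((n : ℝ) - k) = ∑ k ∈ Finset.Ico 1 n, 1 / (k : ℝ) := by
    apply Finset.sum_nbij' (fun j => n - j) (fun k => n - k)
    · intro j hj; simp at hj ⊢; omega
    · intro j hj; simp at hj ⊢; omega
    · intro j hj; simp at hj ⊢; omega
    · intro j hj; simp at hj ⊢; omega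
    · intro j hj
      simp only [Finset.mem_Ico] at hj
      rw [Nat.cast_sub hj.2.le]
  have e : ∑ k ∈ Finset.Ico 1 n, 1 / ((k : ℝ) * (n - k : ℝ)) =
      (n : ℝ)⁻¹ * (∑ k ∈ Finset.Ico 1 n, 1 / (k : ℝ) + ∑ k ∈ Finset.Ico 1 n, 1 / ((n : ℝ) - k)) := by
    rw [← Finset.sum_add_distrib, Finset.mul_sum]
    apply Finset.sum_congr rfl
    intro k hk
    rw [Finset.mem_Ico] at hk
    have h1 : (0 : ℝ) < k := by exact_mod_cast hk.1
    have h2 : (0 : ℝ) < n - k := by rw [sub_pos]; exact_mod_cast hk.2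
    field_simp
    ring
  rw [e, hR]
  have h3 := mul_le_mul_of_nonneg_left hH (inv_nonneg.2 hn0.le)
  linarith

theorem stmt_15 (r : ℕ) (hr : 2 ≤ r) :
    ∃ C : ℝ, 0 < C ∧ ∀ n : ℕ, 1 ≤ n → W r n ≤ C / (n : ℝ) ^ r := by
  have hB : (0 : ℝ) < 2 ^ (r - 2) := by positivity
  obtain ⟨K0, hK0⟩ := exists_nat_gt (8 * (2 : ℝ) ^ (r - 2))
  set K := K0 + 1 with hK
  have hKK : 2 ^ (r - 2) * (2 / (K : ℝ)) ≤ 1 / 4 := by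
    have : (0 : ℝ) < K := by rw [hK]; positivity
    rw [mul_div_assoc', div_le_iff₀ this, hK]; push_cast; linarith
  obtain ⟨N, hN⟩ := small (1 / 4 / 2 ^ (r - 2)) (by positivity)
  set N0 := N + 2 * K with hN0
  set M : ℝ := 2 * K * 2 ^ (r - 1) + (N0 : ℝ) ^ r with hM
  have hKpos : (0 : ℝ) < K := by rw [hK]; positivity
  have hMpos : 0 < M := by positivity
  have main : ∀ n : ℕ, (n : ℝ) ^ r * aa r n ≤ M := by
    intro n
    induction n using Nat.strong_induction_on with
    | _ n ih =>
      rcases lt_or_ge n N0 with hlt | hge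
      · have h1 : (n : ℝ) ^ r ≤ (N0 : ℝ) ^ r := by gcongr
        have h2 : (n : ℝ) ^ r * aa r n ≤ (n : ℝ) ^ r * 1 := by
          gcongr; exact aa_le_one r n hr
        have : (0 : ℝ) ≤ 2 * K * 2 ^ (r - 1) := by positivity
        linarith
      · refine (aa_rec' r n hr).trans ?_
        have hn0 : (0 : ℝ) < n := by exact_mod_cast (by omega : 0 < n)
        rw [Finset.range_eq_Ico, ← Finset.sum_Ico_consecutive _ (Nat.zero_le K) (by omega : K ≤ n)]
        have hA : ∑ k ∈ Finset.Ico 0 K, aa r k * ((n : ℝ) / (n - k : ℝ)) ^ (r - 1) ≤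
            K * 2 ^ (r - 1) := by
          calc _ ≤ ∑ k ∈ Finset.Ico 0 K, (2 : ℝ) ^ (r - 1) := by
                apply Finset.sum_le_sum
                intro k hk
                rw [Finset.mem_Ico] at hk
                have hkn : (2 : ℝ) * k ≤ n := by exact_mod_cast (by omega : 2 * k ≤ n)
                have hd : (0 : ℝ) < n - k := by linarith
                have h2 : (n : ℝ) / (n - k) ≤ 2 := by
                  rw [div_le_iff₀ hd]; linarith
                calc _ ≤ 1 * (2 : ℝ) ^ (r - 1) := by
                      gcongr
                      exact aa_le_one r k hr
                  _ = _ := one_mul _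
            _ = _ := by simp
        have hBd : ∑ k ∈ Finset.Ico K n, aa r k * ((n : ℝ) / (n - k : ℝ)) ^ (r - 1) ≤
            M * (2 ^ (r - 2) * (∑ k ∈ Finset.Ico K n, 1 / (k : ℝ) ^ 2 +
              ∑ k ∈ Finset.Ico K n, 1 / ((k : ℝ) * (n - k : ℝ)))) := by
          rw [← Finset.sum_add_distrib, Finset.mul_sum, Finset.mul_sum]
          apply Finset.sum_le_sum
          intro k hk
          rw [Finset.mem_Ico] at hk
          have hk1 : (1 : ℝ) ≤ k := by exact_mod_cast (by omega : 1 ≤ k)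
          have hk0 : (0 : ℝ) < k := by linarith
          have hd1 : (1 : ℝ) ≤ n - k := by
            rw [le_sub_iff_add_le]; exact_mod_cast (by omega : 1 + k ≤ n)
          have hd0 : (0 : ℝ) < n - k := by linarith
          have ha : aa r k ≤ M / (k : ℝ) ^ r := by
            rw [le_div_iff₀ (by positivity), mul_comm]; exact ih k hk.2
          obtain ⟨q, rfl⟩ : ∃ q, r = q + 2 := ⟨r - 2, by omega⟩
          rw [show q + 2 - 1 = q + 1 by omega, Nat.add_sub_cancel]
          have h2 : (n : ℝ) / (k * (n - k)) ≤ 2 := by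
            rw [div_le_iff₀ (by positivity)]
            nlinarith
          calc _ ≤ M / (k : ℝ) ^ (q + 2) * ((n : ℝ) / (n - k : ℝ)) ^ (q + 1) := by gcongr
            _ = M * (((n : ℝ) / (k * (n - k))) ^ q * (1 / (k : ℝ) ^ 2 + 1 / ((k : ℝ) * (n - k : ℝ)))) := by
                have : 1 / (k : ℝ) ^ 2 + 1 / ((k : ℝ) * (n - k : ℝ)) = n / (k ^ 2 * (n - k)) := by
                  field_simp; ring
                rw [this, div_pow, div_pow, mul_pow]
                field_simp
                ring
            _ ≤ _ := by gcongr
        have hC : ∑ k ∈ Finset.Ico K n, 1 / ((k : ℝ) * (n - k : ℝ)) ≤ 1 / 4 / 2 ^ (r - 2) := by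
          refine le_trans ?_ (hN n (by omega))
          apply Finset.sum_le_sum_of_subset_of_nonneg
          · exact Finset.Ico_subset_Ico_left (by omega)
          · intro k hk _
            rw [Finset.mem_Ico] at hk
            have : (0 : ℝ) < n - k := by rw [sub_pos]; exact_mod_cast hk.2
            positivity
        have hD := tail_sq K n (by omega)
        have hE : 2 ^ (r - 2) * (∑ k ∈ Finset.Ico K n, 1 / (k : ℝ) ^ 2 +
              ∑ k ∈ Finset.Ico K n, 1 / ((k : ℝ) * (n - k : ℝ))) ≤ 1 / 2 := by
          have h1 := mul_le_mul_of_nonneg_left hC hB.le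
          have h2 := mul_le_mul_of_nonneg_left hD hB.le
          rw [mul_div_cancel₀ _ hB.ne'] at h1
          rw [mul_add]; linarith
        have hF := mul_le_mul_of_nonneg_left hE hMpos.le
        have : (0 : ℝ) ≤ (N0 : ℝ) ^ r := by positivity
        linarith
  refine ⟨M, hMpos, fun n hn => (W_le_aa r n hr).trans ?_⟩
  have hn0 : (0 : ℝ) < n := by exact_mod_cast hn
  rw [le_div_iff₀ (by positivity), mul_comm]
  exact main n
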